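/- Let G be a connected (possibly infinite) graph and let s, t ∈ V(G) be distinct. Then the set 𝔠⁻(s,t) of ⊆-minimal st-cuts C for which there is an st-wave 𝒲 with C_𝒲 = C, ordered by ≼, is a complete lattice and a sup-sublattice of the lattice of all ⊆-minimal st-cuts. Moreover, after contracting the s-side of its largest element to s, the resulting graph admits exactly one st-wave, namely the trivial one. -/

import Mathlib

/-!
Common definitions: multigraphs (parallel edges allowed, no loops), walks,
paths, cuts, waves and related notions used in the statements below.
-/

universe u v

/-- A multigraph with vertex type `V` and edge type `E`: every edge is assigned
an unordered pair of *distinct* end-vertices (parallel edges allowed, no loops). -/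
structure Multigraph (V : Type u) (E : Type v) : Type (max u v) where
  inc : E → Sym2 V
  not_isDiag : ∀ e, ¬ (inc e).IsDiag

namespace Multigraph

variable {V : Type u} {E : Type v}

/-- Walks in a multigraph, recorded together with the edges they traverse. -/
inductive Walk (G : Multigraph V E) : V → V → Type (max u v)
  | nil (v : V) : Walk G v v
  | cons {u v w : V} (e : E) (he : G.inc e = s(u, v)) (p : Walk G v w) : Walk G u w

namespace Walk

variable {G : Multigraph V E}

/-- The list of vertices visited by a walk. -/
def support : ∀ {u w : V}, G.Walk u w → List V
  | _, _, .nil v => [v]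
  | u, _, .cons _ _ p => u :: p.support

/-- The list of edges traversed by a walk. -/
def edges : ∀ {u w : V}, G.Walk u w → List E
  | _, _, .nil _ => []
  | _, _, .cons e _ p => e :: p.edges

end Walk

/-- `δ_G(v)`: the set of edges incident with the vertex `v`. -/
def inci (G : Multigraph V E) (v : V) : Set E := {e | v ∈ G.inc e}

/-- `δ_G(X)`: the set of edges with exactly one end-vertex in `X`. -/
def cut (G : Multigraph V E) (X : Set V) : Set E :=
  {e | ∃ x y, G.inc e = s(x, y) ∧ x ∈ X ∧ y ∉ X}

/-- Connectedness of a multigraph. -/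
def Connected (G : Multigraph V E) : Prop := ∀ u v : V, Nonempty (G.Walk u v)

/-- A `T`-path: a path connecting two distinct vertices of `T`
with no internal vertex in `T`. -/
structure TPath (G : Multigraph V E) (T : Set V) : Type (max u v) where
  first : V
  last : V
  walk : G.Walk first last
  first_mem : first ∈ T
  last_mem : last ∈ T
  ne : first ≠ last
  support_nodup : walk.support.Nodup
  internal : ∀ x ∈ walk.support, x ∈ T → x = first ∨ x = last

/-- A system of pairwise edge-disjoint `T`-paths. -/
def TPathDisjoint (G : Multigraph V E) {T : Set V} (P : Set (G.TPath T)) : Prop :=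
  ∀ p ∈ P, ∀ q ∈ P, p ≠ q → ∀ e, e ∈ p.walk.edges → e ∉ q.walk.edges

/-- An `st`-path: a path from `s` to `t` (no internal vertex is `s` or `t`,
which is automatic as the vertices of a path are distinct). -/
structure STPath (G : Multigraph V E) (s t : V) : Type (max u v) where
  walk : G.Walk s t
  support_nodup : walk.support.Nodup

/-- A system of pairwise edge-disjoint `st`-paths. -/
def STPathDisjoint (G : Multigraph V E) {s t : V} (P : Set (G.STPath s t)) : Prop :=
  ∀ p ∈ P, ∀ q ∈ P, p ≠ q → ∀ e, e ∈ p.walk.edges → e ∉ q.walk.edges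

/-- A nontrivial path starting at `s`. -/
structure SPath (G : Multigraph V E) (s : V) : Type (max u v) where
  last : V
  walk : G.Walk s last
  support_nodup : walk.support.Nodup
  edges_ne_nil : walk.edges ≠ []

/-- A system of pairwise edge-disjoint paths starting at `s`. -/
def SPathDisjoint (G : Multigraph V E) {s : V} (W : Set (G.SPath s)) : Prop :=
  ∀ p ∈ W, ∀ q ∈ W, p ≠ q → ∀ e, e ∈ p.walk.edges → e ∉ q.walk.edges

/-- The set of last edges of a system of paths starting at `s`. -/
def lastEdges (G : Multigraph V E) {s : V} (W : Set (G.SPath s)) : Set E :=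
  {e | ∃ p ∈ W, p.walk.edges.getLast? = some e}

/-- `C` is a cut separating `A` from `B`. -/
def SepCut (G : Multigraph V E) (A B : Set V) (C : Set E) : Prop :=
  ∃ X : Set V, A ⊆ X ∧ (∀ b ∈ B, b ∉ X) ∧ C = G.cut X

/-- `C` is a `⊆`-minimal cut separating `A` from `B`. -/
def IsMinSepCut (G : Multigraph V E) (A B : Set V) (C : Set E) : Prop :=
  G.SepCut A B C ∧ ∀ D : Set E, G.SepCut A B D → D ⊆ C → D = C

/-- An `s`-`B`-wave: a system of pairwise edge-disjoint paths starting at `s`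
whose set of last edges is a `⊆`-minimal cut separating `s` from `B`. -/
def IsWave (G : Multigraph V E) (s : V) (B : Set V) (W : Set (G.SPath s)) : Prop :=
  G.SPathDisjoint W ∧ G.IsMinSepCut {s} B (G.lastEdges W)

/-- An Erdős–Menger `st`-cut: an `st`-cut which is orthogonal to some system of
pairwise edge-disjoint `st`-paths, i.e. it consists of exactly one edge chosen
from each path of the system. -/
def IsEMCut (G : Multigraph V E) (s t : V) (C : Set E) : Prop :=
  (∃ X : Set V, s ∈ X ∧ t ∉ X ∧ C = G.cut X) ∧
  ∃ P : Set (G.STPath s t), G.STPathDisjoint P ∧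
    (∀ p ∈ P, ∃! e, e ∈ C ∧ e ∈ p.walk.edges) ∧
    (∀ e ∈ C, ∃ p ∈ P, e ∈ p.walk.edges)

/-- The order `≼` on `st`-cuts: the `s`-side of `C` is contained in the
`s`-side of `D` (in a connected graph the `s`-side is unique). -/
def CutLE (G : Multigraph V E) (s t : V) (C D : Set E) : Prop :=
  ∃ X Y : Set V, s ∈ X ∧ t ∉ X ∧ C = G.cut X ∧ s ∈ Y ∧ t ∉ Y ∧ D = G.cut Y ∧ X ⊆ Y

/-- A cut of the form `C_W` for some `st`-wave `W`. -/
def IsWaveCut (G : Multigraph V E) (s t : V) (C : Set E) : Prop :=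
  ∃ W : Set (G.SPath s), G.IsWave s {t} W ∧ G.lastEdges W = C

/-- Deletion of a set of edges. -/
def deleteEdges (G : Multigraph V E) (F : Set E) : Multigraph V {e : E // e ∉ F} where
  inc e := G.inc e.1
  not_isDiag e := G.not_isDiag e.1

open Classical in
/-- Contraction of the vertex set `X` to the vertex `s` (edges inside `X` are
deleted, edges leaving `X` are redirected to `s`). -/
noncomputable def contract (G : Multigraph V E) (X : Set V) (s : V) :
    Multigraph V {e : E // ¬ (Sym2.map (fun v => if v ∈ X then s else v) (G.inc e)).IsDiag} where
  inc e := Sym2.map (fun v => if v ∈ X then s else v) (G.inc e.1)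
  not_isDiag e := e.2

/-- Reachability inside a set `S` of vertices. -/
def ReachableIn (G : Multigraph V E) (S : Set V) (x y : V) : Prop :=
  ∃ p : G.Walk x y, ∀ z ∈ p.support, z ∈ S

/-- `Y` is (the vertex set of) a connected component of the subgraph of `G`
induced by `S`. -/
def IsComponentOf (G : Multigraph V E) (Y S : Set V) : Prop :=
  Y.Nonempty ∧ Y ⊆ S ∧ ∀ x ∈ Y, ∀ y ∈ S, (G.ReachableIn S x y ↔ y ∈ Y)

/-- A cycle in a multigraph (a closed walk with distinct edges whose
vertices are distinct except that the first one equals the last one). -/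
structure Cycle (G : Multigraph V E) : Type (max u v) where
  base : V
  walk : G.Walk base base
  edges_ne_nil : walk.edges ≠ []
  edges_nodup : walk.edges.Nodup
  support_tail_nodup : walk.support.tail.Nodup

/-- A graph is Eulerian if its edge set can be partitioned into
edge sets of cycles. -/
def IsEulerian (G : Multigraph V E) : Prop :=
  ∃ C : Set G.Cycle,
    (∀ c ∈ C, ∀ d ∈ C, c ≠ d → ∀ e, e ∈ c.walk.edges → e ∉ d.walk.edges) ∧
    ∀ e : E, ∃ c ∈ C, e ∈ c.walk.edges

/-- A `T`-partition: a family `{A t : t ∈ T}` of pairwise disjoint vertex sets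
with `A t ∩ T = {t}`. -/
def IsTPartition (T : Set V) (A : V → Set V) : Prop :=
  (∀ t ∈ T, A t ∩ T = {t}) ∧
  ∀ t₁ ∈ T, ∀ t₂ ∈ T, t₁ ≠ t₂ → Disjoint (A t₁) (A t₂)

end Multigraph
namespace Multigraph

section Helpers

variable {V : Type u} {E : Type v} {G : Multigraph V E}

/-- Concatenation of walks. -/
def Walk.app : ∀ {a b c : V}, G.Walk a b → G.Walk b c → G.Walk a c
  | _, _, _, .nil _, q => q
  | _, _, _, .cons e he p, q => .cons e he (p.app q)

theorem Walk.start_mem {a b : V} (p : G.Walk a b) : a ∈ p.support := by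
  cases p <;> simp [Walk.support]

theorem Walk.edges_app {a b c : V} (p : G.Walk a b) (q : G.Walk b c) :
    (p.app q).edges = p.edges ++ q.edges := by
  induction p with
  | nil v => simp [Walk.app, Walk.edges]
  | cons e he p ih => simp [Walk.app, Walk.edges, ih]

theorem Walk.mem_support_app {a b c : V} (p : G.Walk a b) (q : G.Walk b c) (z : V)
    (hz : z ∈ (p.app q).support) : z ∈ p.support ∨ z ∈ q.support := by
  induction p with
  | nil v => exact Or.inr hz
  | cons e he p ih =>
    simp only [Walk.app, Walk.support, List.mem_cons] at hz ⊢
    rcases hz with h | h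
    · exact Or.inl (Or.inl h)
    · rcases ih q h with h | h
      · exact Or.inl (Or.inr h)
      · exact Or.inr h

theorem Walk.support_snoc {a b c : V} (p : G.Walk a b) (e : E) (he : G.inc e = s(b, c)) :
    (p.app (.cons e he (.nil c))).support = p.support ++ [c] := by
  induction p with
  | nil v => simp [Walk.app, Walk.support]
  | cons f hf p ih => simp [Walk.app, Walk.support, ih he]

/-- The final part of a walk from a visited vertex on. -/
theorem Walk.drop {a b : V} (p : G.Walk a b) (z : V) (hz : z ∈ p.support) :
    ∃ q : G.Walk z b, q.support.Sublist p.support ∧ (∀ e ∈ q.edges, e ∈ p.edges) := by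
  induction p with
  | nil v =>
    simp only [Walk.support, List.mem_singleton] at hz
    subst hz
    exact ⟨.nil z, List.Sublist.refl _, fun e h => h⟩
  | cons f hf p ih =>
    simp only [Walk.support, List.mem_cons] at hz
    by_cases h : z ∈ p.support
    · obtain ⟨q, h1, h2⟩ := ih h
      exact ⟨q, h1.trans (List.sublist_cons_self _ _),
        fun e he => List.mem_cons_of_mem _ (h2 e he)⟩
    · rcases hz with rfl | hz
      · exact ⟨.cons f hf p, List.Sublist.refl _, fun e h => h⟩
      · exact absurd hz h

/-- Every walk contains a path. -/
theorem Walk.bypass {a b : V} (p : G.Walk a b) :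
    ∃ q : G.Walk a b, q.support.Nodup ∧ (∀ z ∈ q.support, z ∈ p.support) ∧
      (∀ e ∈ q.edges, e ∈ p.edges) := by
  induction p with
  | nil v => exact ⟨.nil v, by simp [Walk.support], fun _ h => h, fun _ h => h⟩
  | @cons a a' b f hf p ih =>
    obtain ⟨q, h1, h2, h3⟩ := ih
    by_cases h : a ∈ q.support
    · obtain ⟨r, h4, h5⟩ := q.drop a h
      exact ⟨r, h1.sublist h4, fun z hz => List.mem_cons_of_mem _ (h2 z (h4.subset hz)),
        fun e he => List.mem_cons_of_mem _ (h3 e (h5 e he))⟩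
    · refine ⟨.cons f hf q, ?_, ?_, ?_⟩
      · simpa [Walk.support] using ⟨h, h1⟩
      · intro z hz
        simp only [Walk.support, List.mem_cons] at hz ⊢
        exact hz.imp_right (h2 z)
      · intro e he
        simp only [Walk.edges, List.mem_cons] at he ⊢
        exact he.imp_right (h3 e)

theorem mem_cut_of {X : Set V} {e : E} {x y : V} (h : G.inc e = s(x, y)) (hx : x ∈ X)
    (hy : y ∉ X) : e ∈ G.cut X := ⟨x, y, h, hx, hy⟩

theorem Walk.mem_of_not_cut {a b : V} (p : G.Walk a b) (Y : Set V)
    (h : ∀ e ∈ p.edges, e ∉ G.cut Y) : a ∈ Y ↔ b ∈ Y := by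
  induction p with
  | nil v => rfl
  | @cons a a' b f hf p ih =>
    rw [← ih fun e he => h e (List.mem_cons_of_mem _ he)]
    have hf' := h f (by simp [Walk.edges])
    constructor
    · intro ha
      by_contra hb
      exact hf' (mem_cut_of hf ha hb)
    · intro ha
      by_contra hb
      exact hf' (mem_cut_of (hf.trans Sym2.eq_swap) ha hb)

theorem Walk.ends_mem {a b : V} (p : G.Walk a b) (e : E) (he : e ∈ p.edges) (v : V)
    (hv : v ∈ G.inc e) : v ∈ p.support := by
  induction p with
  | nil v => simp [Walk.edges] at he
  | cons f hf p ih =>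
    simp only [Walk.edges, List.mem_cons] at he
    simp only [Walk.support, List.mem_cons]
    rcases he with rfl | he
    · rw [hf, Sym2.mem_iff] at hv
      rcases hv with rfl | rfl
      · exact Or.inl rfl
      · exact Or.inr p.start_mem
    · exact Or.inr (ih he)

theorem not_mem_cut_of_inside {X : Set V} {e : E} (h : ∀ v ∈ G.inc e, v ∈ X) :
    e ∉ G.cut X := by
  rintro ⟨x, y, hxy, hx, hy⟩
  exact hy (h y (by simp [hxy]))

theorem not_mem_cut_of_outside {X : Set V} {e : E} (h : ∀ v ∈ G.inc e, v ∉ X) :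
    e ∉ G.cut X := by
  rintro ⟨x, y, hxy, hx, hy⟩
  exact h x (by simp [hxy]) hx

theorem side_unique (hconn : G.Connected) {s : V} {X Y : Set V} (hX : s ∈ X) (hY : s ∈ Y)
    (h : G.cut X = G.cut Y) : X = Y := by
  ext v
  obtain ⟨p⟩ := hconn s v
  have : s ∈ {v | v ∈ X ↔ v ∈ Y} ↔ v ∈ {v | v ∈ X ↔ v ∈ Y} := by
    apply p.mem_of_not_cut
    rintro e - ⟨x, y, hxy, hx, hy⟩
    have h1 : ∀ Z : Set V, e ∈ G.cut Z ↔ ¬ (x ∈ Z ↔ y ∈ Z) := by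
      intro Z
      constructor
      · rintro ⟨x', y', hxy', hx', hy'⟩
        rw [hxy, Sym2.eq_iff] at hxy'
        rcases hxy' with ⟨rfl, rfl⟩ | ⟨rfl, rfl⟩ <;> tauto
      · intro hn
        by_cases hz : x ∈ Z
        · exact mem_cut_of hxy hz (by tauto)
        · exact mem_cut_of (hxy.trans Sym2.eq_swap) (by tauto) hz
    have h2 := h1 X
    have h3 := h1 Y
    rw [h] at h2
    simp only [Set.mem_ofPred_eq] at hx hy
    tauto
  exact this.1 (by simp [hX, hY])

/-- `F` is a system of disjoint edge sets linking `A` inside `X` to every edge of `cut X`. -/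
def Linking (G : Multigraph V E) (A X : Set V) (F : E → Set E) : Prop :=
  (∀ e ∈ G.cut X, e ∈ F e) ∧
  (∀ e x y, G.inc e = s(x, y) → x ∈ X → y ∉ X →
    ∃ z ∈ A, ∃ p : G.Walk z x, (∀ w ∈ p.support, w ∈ X) ∧ ∀ f ∈ p.edges, f ∈ F e) ∧
  ∀ e ∈ G.cut X, ∀ e' ∈ G.cut X, ∀ f, f ∈ F e → f ∈ F e' → e = e'

theorem Linking.iUnion {ι : Type*} [LinearOrder ι] [WellFoundedLT ι] {s : V}
    (X : ι → Set V) (F : ι → E → Set E)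
    (hF : ∀ i, G.Linking ({s} ∪ ⋃ j < i, X j) (X i) (F i)) :
    ∃ F', G.Linking {s} (⋃ i, X i) F' := by
  classical
  let step : E → E → Prop := fun f e => ∃ i, (∀ v ∈ G.inc f, v ∈ X i) ∧
    (∃ v ∈ G.inc f, ∀ j < i, v ∉ X j) ∧ f ∈ F i e ∧ e ∈ G.cut (X i)
  have hfun : Relator.RightUnique step := by
    rintro f e e' ⟨i, h1, ⟨v, hv, hvm⟩, h3, h4⟩ ⟨i', h1', ⟨v', hv', hvm'⟩, h3', h4'⟩
    have hii : i = i' := by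
      apply le_antisymm
      · by_contra hlt
        exact hvm i' (not_le.1 hlt) (h1' v hv)
      · by_contra hlt
        exact hvm' i (not_le.1 hlt) (h1 v' hv')
    subst hii
    exact (hF i).2.2 e h4 e' h4' f h3 h3'
  have key : ∀ i, ∀ e x y, G.inc e = s(x, y) → x ∈ X i → (∀ j < i, x ∉ X j) → y ∉ X i →
      ∃ p : G.Walk s x, (∀ w ∈ p.support, w ∈ ⋃ i, X i) ∧
        ∀ f ∈ p.edges, Relation.ReflTransGen step f e := by
    intro i
    induction i using WellFoundedLT.induction with
    | ind i IH =>
    intro e x y hxy hx hxm hy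
    have hecut : e ∈ G.cut (X i) := mem_cut_of hxy hx hy
    obtain ⟨z, hz, p, hpX, hpF⟩ := (hF i).2.1 e x y hxy hx hy
    have claim : ∀ z (p : G.Walk z x), (∀ w ∈ p.support, w ∈ X i) →
        (∀ f ∈ p.edges, f ∈ F i e) →
        (∃ p : G.Walk s x, (∀ w ∈ p.support, w ∈ ⋃ i, X i) ∧
          ∀ f ∈ p.edges, Relation.ReflTransGen step f e) ∨
        ((∀ w ∈ p.support, ∀ j < i, w ∉ X j) ∧ ∀ f ∈ p.edges, step f e) := by
      clear hpF hpX p hz z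
      intro z p hpX hpF
      induction p with
      | nil v =>
        right
        simp only [Walk.support, Walk.edges, List.mem_singleton]
        exact ⟨by rintro w rfl; exact hxm, by simp⟩
      | @cons a a' b f hf q ih =>
        simp only [Walk.support, Walk.edges, List.mem_cons, forall_eq_or_imp] at hpX hpF
        rcases ih hxy hx hxm hpX.2 hpF.2 with h | ⟨h1, h2⟩
        · exact Or.inl h
        have ha'm := h1 a' q.start_mem
        have ha' := hpX.2 a' q.start_mem
        have hstep : step f e := by
          refine ⟨i, ?_, ⟨a', by simp [hf], ha'm⟩, hpF.1, hecut⟩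
          intro v hv
          rw [hf, Sym2.mem_iff] at hv
          rcases hv with rfl | rfl
          · exact hpX.1
          · exact ha'
        by_cases ham : ∀ j < i, a ∉ X j
        · right
          simp only [Walk.support, Walk.edges, List.mem_cons, forall_eq_or_imp]
          exact ⟨⟨ham, h1⟩, hstep, h2⟩
        · left
          have hne : {j | a ∈ X j}.Nonempty := ⟨i, hpX.1⟩
          let j := wellFounded_lt.min {j | a ∈ X j} hne
          have hj : a ∈ X j := wellFounded_lt.min_mem {j | a ∈ X j} hne
          have hjm : ∀ k < j, a ∉ X k := fun k hk hak =>
            wellFounded_lt.not_lt_min {j | a ∈ X j} hak hk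
          have hji : j < i := by
            push Not at ham
            obtain ⟨k, hk, hak⟩ := ham
            refine lt_of_le_of_lt ?_ hk
            by_contra hlt
            exact hjm k (not_le.1 hlt) hak
          obtain ⟨r, hr1, hr2⟩ := IH j hji f a a' hf hj hjm (ha'm j hji)
          refine ⟨r.app (.cons f hf q), ?_, ?_⟩
          · intro w hw
            rcases Walk.mem_support_app _ _ _ hw with hw | hw
            · exact hr1 w hw
            · simp only [Walk.support, List.mem_cons] at hw
              rcases hw with rfl | hw
              · exact Set.mem_iUnion.2 ⟨i, hpX.1⟩
              · exact Set.mem_iUnion.2 ⟨i, hpX.2 w hw⟩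
          · intro g hg
            simp only [Walk.edges_app, Walk.edges, List.mem_append, List.mem_cons] at hg
            rcases hg with hg | rfl | hg
            · exact (hr2 g hg).tail hstep
            · exact .single hstep
            · exact .single (h2 g hg)
    rcases claim z p hpX hpF with h | ⟨h1, h2⟩
    · exact h
    · rcases hz with hz | hz
      · rw [Set.mem_singleton_iff] at hz
        subst hz
        exact ⟨p, fun w hw => Set.mem_iUnion.2 ⟨i, hpX w hw⟩, fun f hf => .single (h2 f hf)⟩
      · simp only [Set.mem_iUnion] at hz
        obtain ⟨j, hj, hzj⟩ := hz
        exact absurd hzj (h1 z p.start_mem j hj)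
  refine ⟨fun e => {f | Relation.ReflTransGen step f e}, ?_, ?_, ?_⟩
  · intro e _
    exact .refl
  · intro e x y hxy hx hy
    have hne : {j | x ∈ X j}.Nonempty := Set.mem_iUnion.1 hx
    let j := wellFounded_lt.min {j | x ∈ X j} hne
    have hj : x ∈ X j := wellFounded_lt.min_mem {j | x ∈ X j} hne
    have hjm : ∀ k < j, x ∉ X k := fun k hk hak =>
      wellFounded_lt.not_lt_min {j | x ∈ X j} hak hk
    obtain ⟨p, h1, h2⟩ := key j e x y hxy hj hjm (fun h => hy (Set.mem_iUnion.2 ⟨j, h⟩))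
    exact ⟨s, rfl, p, h1, h2⟩
  · intro e he e' he' f hf hf'
    have hend : ∀ e ∈ G.cut (⋃ i, X i), ∀ g, ¬ step e g := by
      rintro e ⟨x, y, hxy, hx, hy⟩ g ⟨i, hi, -⟩
      exact hy (Set.mem_iUnion.2 ⟨i, hi y (by simp [hxy])⟩)
    rcases Relation.ReflTransGen.total_of_right_unique hfun hf hf' with h | h
    · rcases Relation.ReflTransGen.cases_head h with h | ⟨g, hg, -⟩
      · exact h
      · exact absurd hg (hend e he g)
    · rcases Relation.ReflTransGen.cases_head h with h | ⟨g, hg, -⟩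
      · exact h.symm
      · exact absurd hg (hend e' he' g)

theorem Linking.mono {A B X : Set V} {F : E → Set E} (h : G.Linking A X F) (hAB : A ⊆ B) :
    G.Linking B X F := by
  refine ⟨h.1, fun e x y hxy hx hy => ?_, h.2.2⟩
  obtain ⟨z, hz, p⟩ := h.2.1 e x y hxy hx hy
  exact ⟨z, hAB hz, p⟩

theorem Linking.singleton (s : V) : G.Linking {s} {s} (fun e => {e}) := by
  refine ⟨fun e _ => rfl, ?_, ?_⟩
  · rintro e x y hxy rfl hy
    exact ⟨x, rfl, .nil x, by simp [Walk.support], by simp [Walk.edges]⟩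
  · rintro e _ e' _ f rfl h
    exact h

/-- Splitting a walk at its only crossing. -/
theorem Walk.before_cross {a b : V} (p : G.Walk a b) (X : Set V) (e : E) (ha : a ∈ X)
    (hl : p.edges.getLast? = some e) (he : e ∈ G.cut X)
    (h : ∀ f ∈ p.edges, f ∈ G.cut X → f = e) :
    ∃ x y, G.inc e = s(x, y) ∧ x ∈ X ∧ y ∉ X ∧
      ∃ q : G.Walk a x, (∀ w ∈ q.support, w ∈ X) ∧ ∀ f ∈ q.edges, f ∈ p.edges := by
  induction p with
  | nil v => simp [Walk.edges] at hl
  | @cons a a' b f hf p ih =>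
    simp only [Walk.edges, List.mem_cons, forall_eq_or_imp] at h
    by_cases ha' : a' ∈ X
    · have hfc : f ∉ G.cut X := by
        apply not_mem_cut_of_inside
        intro v hv
        rw [hf, Sym2.mem_iff] at hv
        rcases hv with rfl | rfl <;> assumption
      have hl' : p.edges.getLast? = some e := by
        rw [Walk.edges, List.getLast?_cons] at hl
        cases hp : p.edges.getLast? with
        | none =>
          rw [hp] at hl
          simp only [Option.getD_none, Option.some.injEq] at hl
          exact absurd (hl ▸ he) hfc
        | some g =>
          rw [hp] at hl
          simpa using hl
      obtain ⟨x, y, hxy, hx, hy, q, h1, h2⟩ := ih ha' hl' h.2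
      refine ⟨x, y, hxy, hx, hy, .cons f hf q, ?_, ?_⟩
      · simpa [Walk.support] using ⟨ha, h1⟩
      · intro g hg
        simp only [Walk.edges, List.mem_cons] at hg ⊢
        exact hg.imp_right (h2 g)
    · have := h.1 (mem_cut_of hf ha ha')
      subst this
      exact ⟨a, a', hf, ha, ha', .nil a, by simpa [Walk.support] using ha,
        by simp [Walk.edges]⟩

theorem IsWave.linking {s : V} {B : Set V} {W : Set (G.SPath s)} (hW : G.IsWave s B W)
    {X : Set V} (hs : s ∈ X) (hX : G.lastEdges W = G.cut X) :
    ∃ F, G.Linking {s} X F := by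
  have hd := hW.1
  have hlast : ∀ p : G.SPath s, ∀ e, p.walk.edges.getLast? = some e → e ∈ p.walk.edges :=
    fun p e h => List.mem_of_getLast? h
  refine ⟨fun e => {f | ∃ p ∈ W, p.walk.edges.getLast? = some e ∧ f ∈ p.walk.edges},
    ?_, ?_, ?_⟩
  · intro e he
    rw [← hX] at he
    obtain ⟨p, hp, hpe⟩ := he
    exact ⟨p, hp, hpe, hlast p e hpe⟩
  · intro e x y hxy hx hy
    have he : e ∈ G.cut X := mem_cut_of hxy hx hy
    have he' := he
    rw [← hX] at he'
    obtain ⟨p, hp, hpe⟩ := he'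
    obtain ⟨x', y', hxy', hx', hy', q, h1, h2⟩ := p.walk.before_cross X e hs hpe he (by
      intro f hf hfc
      rw [← hX] at hfc
      obtain ⟨q, hq, hqf⟩ := hfc
      by_cases hpq : p = q
      · subst hpq
        rw [hpe] at hqf
        exact (Option.some.inj hqf).symm
      · exact absurd (hlast q f hqf) (hd p hp q hq hpq f hf))
    have hxx : x' = x := by
      rw [hxy, Sym2.eq_iff] at hxy'
      rcases hxy' with ⟨h, -⟩ | ⟨h, h'⟩
      · exact h.symm
      · subst h; exact absurd hx hy'
    subst hxx
    exact ⟨s, rfl, q, h1, fun f hf => ⟨p, hp, hpe, h2 f hf⟩⟩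
  · rintro e - e' - f ⟨p, hp, hpe, hfp⟩ ⟨q, hq, hqe, hfq⟩
    by_cases hpq : p = q
    · subst hpq
      rw [hpe] at hqe
      exact Option.some.inj hqe
    · exact absurd hfq (hd p hp q hq hpq f hfp)

theorem Linking.isWaveCut {s t : V} {X : Set V} {F : E → Set E} (h : G.Linking {s} X F)
    (hmin : G.IsMinSepCut {s} {t} (G.cut X)) : G.IsWaveCut s t (G.cut X) := by
  have hex : ∀ e : G.cut X, ∃ p : G.SPath s, p.walk.edges.getLast? = some e.1 ∧
      ∀ f ∈ p.walk.edges, f ∈ F e.1 := by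
    rintro ⟨e, he⟩
    have hee := h.1 e he
    obtain ⟨x, y, hxy, hx, hy⟩ := he
    obtain ⟨z, hz, p, hp1, hp2⟩ := h.2.1 e x y hxy hx hy
    rw [Set.mem_singleton_iff] at hz
    subst hz
    obtain ⟨q, hq1, hq2, hq3⟩ := p.bypass
    refine ⟨⟨y, q.app (.cons e hxy (.nil y)), ?_, ?_⟩, ?_, ?_⟩
    · rw [Walk.support_snoc, List.nodup_append]
      refine ⟨hq1, by simp, ?_⟩
      intro a ha b hb hab
      simp only [List.mem_singleton] at hb
      subst hb
      subst hab
      exact hy (hp1 _ (hq2 _ ha))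
    · simp [Walk.edges_app, Walk.edges]
    · simp [Walk.edges_app, Walk.edges]
    · intro f hf
      simp only [Walk.edges_app, Walk.edges, List.mem_append, List.mem_singleton] at hf
      rcases hf with hf | rfl
      · exact hp2 f (hq3 f hf)
      · exact hee
  choose P hP1 hP2 using hex
  have hL : G.lastEdges (Set.range P) = G.cut X := by
    ext e
    constructor
    · rintro ⟨p, ⟨e', rfl⟩, hp⟩
      rw [hP1] at hp
      exact Option.some.inj hp ▸ e'.2
    · intro he
      exact ⟨P ⟨e, he⟩, ⟨_, rfl⟩, hP1 _⟩
  refine ⟨Set.range P, ⟨?_, by rw [hL]; exact hmin⟩, hL⟩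
  rintro _ ⟨e, rfl⟩ _ ⟨e', rfl⟩ hne f hf hf'
  exact hne (congrArg P (Subtype.ext (h.2.2 e e.2 e' e'.2 f (hP2 e f hf) (hP2 e' f hf'))))

/-- The complement of the component of `t` outside `U`. -/
def hull (G : Multigraph V E) (t : V) (U : Set V) : Set V := {v | ¬ G.ReachableIn Uᶜ t v}

theorem subset_hull (t : V) (U : Set V) : U ⊆ G.hull t U := by
  rintro v hv ⟨p, hp⟩
  have : ∀ {a b : V} (p : G.Walk a b), b ∈ p.support := by
    intro a b p
    induction p with
    | nil v => simp [Walk.support]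
    | cons e he p ih => simp [Walk.support, ih]
  exact hp v (this p) hv

theorem not_mem_hull {t : V} {U : Set V} (ht : t ∉ U) : t ∉ G.hull t U := by
  intro h
  exact h ⟨.nil t, by simpa [Walk.support] using ht⟩

/-- An edge leaving the hull starts in the set itself. -/
theorem hull_edge {t : V} {U : Set V} {e : E} {x y : V} (hxy : G.inc e = s(x, y))
    (hx : x ∈ G.hull t U) (hy : y ∉ G.hull t U) : x ∈ U := by
  by_contra hxU
  apply hx
  simp only [hull, Set.mem_ofPred_eq, not_not] at hy
  obtain ⟨p, hp⟩ := hy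
  refine ⟨p.app (.cons e (hxy.trans Sym2.eq_swap) (.nil x)), ?_⟩
  intro z hz
  rw [Walk.support_snoc, List.mem_append, List.mem_singleton] at hz
  rcases hz with hz | rfl
  · exact hp z hz
  · exact hxU

theorem hull_mem_compl {t : V} {U : Set V} {y : V} (hy : y ∉ G.hull t U) : y ∉ U :=
  fun h => hy (subset_hull t U h)

theorem hull_cut_subset (t : V) (U : Set V) : G.cut (G.hull t U) ⊆ G.cut U := by
  rintro e ⟨x, y, hxy, hx, hy⟩
  exact ⟨x, y, hxy, hull_edge hxy hx hy, hull_mem_compl hy⟩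

theorem Linking.hull {A U : Set V} {F : E → Set E} (t : V) (h : G.Linking A U F) :
    G.Linking A (G.hull t U) F := by
  refine ⟨fun e he => h.1 e (hull_cut_subset t U he), ?_,
    fun e he e' he' => h.2.2 e (hull_cut_subset t U he) e' (hull_cut_subset t U he')⟩
  intro e x y hxy hx hy
  obtain ⟨z, hz, p, h1, h2⟩ := h.2.1 e x y hxy (hull_edge hxy hx hy) (hull_mem_compl hy)
  exact ⟨z, hz, p, fun w hw => subset_hull t U (h1 w hw), h2⟩

theorem Linking.hull_min {s t : V} {U : Set V} {F : E → Set E} (h : G.Linking {s} U F)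
    (hs : s ∈ U) (ht : t ∉ U) : G.IsMinSepCut {s} {t} (G.cut (G.hull t U)) := by
  refine ⟨⟨G.hull t U, by simpa using subset_hull t U hs, by simpa using not_mem_hull ht, rfl⟩,
    ?_⟩
  rintro _ ⟨Y, hsY, htY, rfl⟩ hsub
  refine Set.Subset.antisymm hsub ?_
  rintro e ⟨x, y, hxy, hx, hy⟩
  have hsY : s ∈ Y := by simpa using hsY
  have htY : t ∉ Y := by simpa using htY
  have hyY : y ∉ Y := by
    have hy' := hy
    simp only [Multigraph.hull, Set.mem_ofPred_eq, not_not] at hy'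
    obtain ⟨p, hp⟩ := hy'
    rw [← p.mem_of_not_cut Y]
    · exact htY
    · intro f hf hfY
      have := hull_cut_subset t U (hsub hfY)
      exact not_mem_cut_of_outside (fun v hv => hp v (p.ends_mem f hf v hv)) this
  have hxY : x ∈ Y := by
    obtain ⟨z, hz, p, h1, h2⟩ := h.2.1 e x y hxy (hull_edge hxy hx hy) (hull_mem_compl hy)
    rw [Set.mem_singleton_iff] at hz
    subst hz
    rw [← p.mem_of_not_cut Y]
    · exact hsY
    · intro f hf hfY
      exact not_mem_cut_of_inside
        (fun v hv => subset_hull t U (h1 v (p.ends_mem f hf v hv))) (hsub hfY)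
  exact ⟨x, y, hxy, hxY, hyY⟩

theorem Linking.hull_waveCut {s t : V} {U : Set V} {F : E → Set E} (h : G.Linking {s} U F)
    (hs : s ∈ U) (ht : t ∉ U) : G.IsWaveCut s t (G.cut (G.hull t U)) :=
  (h.hull t).isWaveCut (h.hull_min hs ht)

theorem hull_eq_of_min (hconn : G.Connected) {s t : V} {Y : Set V}
    (hmin : G.IsMinSepCut {s} {t} (G.cut Y)) (hs : s ∈ Y) (ht : t ∉ Y) :
    G.hull t Y = Y := by
  apply side_unique hconn (subset_hull t Y hs) hs
  apply hmin.2 _ _ (hull_cut_subset t Y)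
  exact ⟨G.hull t Y, by simpa using subset_hull t Y hs, by simpa using not_mem_hull ht, rfl⟩

theorem hull_mono (t : V) {U Y : Set V} (h : U ⊆ Y) : G.hull t U ⊆ G.hull t Y := by
  rintro v hv ⟨p, hp⟩
  exact hv ⟨p, fun z hz hzU => hp z hz (h hzU)⟩

theorem IsWaveCut.min {s t : V} {C : Set E} (h : G.IsWaveCut s t C) :
    G.IsMinSepCut {s} {t} C := by
  obtain ⟨W, hW, rfl⟩ := h
  exact hW.2

theorem IsMinSepCut.side {s t : V} {C : Set E} (h : G.IsMinSepCut {s} {t} C) :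
    ∃ X, s ∈ X ∧ t ∉ X ∧ C = G.cut X := by
  obtain ⟨⟨X, h1, h2, h3⟩, -⟩ := h
  exact ⟨X, by simpa using h1, by simpa using h2, h3⟩

theorem IsWaveCut.linking {s t : V} {C : Set E} (h : G.IsWaveCut s t C) {X : Set V}
    (hs : s ∈ X) (hC : C = G.cut X) : ∃ F, G.Linking {s} X F := by
  obtain ⟨W, hW, rfl⟩ := h
  exact hW.linking hs hC

theorem waveCuts_sup (hconn : G.Connected) {s t : V} (hst : s ≠ t) (S : Set (Set E))
    (hS : ∀ C ∈ S, G.IsWaveCut s t C) :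
    ∃ C, G.IsWaveCut s t C ∧ (∀ D ∈ S, G.CutLE s t D C) ∧
        ∀ C', G.IsMinSepCut {s} {t} C' → (∀ D ∈ S, G.CutLE s t D C') →
          G.CutLE s t C C' := by
  classical
  let 𝒳 : Set (Set V) := {X | X = {s} ∨ (s ∈ X ∧ t ∉ X ∧ G.cut X ∈ S)}
  have hF : ∀ X : 𝒳, ∃ F, G.Linking {s} X.1 F := by
    rintro ⟨X, rfl | ⟨h1, h2, h3⟩⟩
    · exact ⟨_, Linking.singleton s⟩
    · exact (hS _ h3).linking h1 rfl
  choose F hF using hF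
  obtain ⟨_, _⟩ := exists_wellFoundedLT 𝒳
  obtain ⟨F', hF'⟩ := Linking.iUnion (s := s) (fun X : 𝒳 => X.1) F
    (fun i => (hF i).mono Set.subset_union_left)
  set U : Set V := ⋃ X : 𝒳, X.1 with hU
  have hsub : ∀ X ∈ 𝒳, X ⊆ U := fun X hX => Set.subset_iUnion (fun X : 𝒳 => X.1) ⟨X, hX⟩
  have hsU : s ∈ U := hsub {s} (Or.inl rfl) rfl
  have htU : t ∉ U := by
    intro h
    obtain ⟨⟨X, hX⟩, hx⟩ := Set.mem_iUnion.1 h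
    change t ∈ X at hx
    rcases hX with h | ⟨-, h, -⟩
    · rw [h] at hx
      exact hst (Set.mem_singleton_iff.1 hx).symm
    · exact h hx
  refine ⟨G.cut (G.hull t U), hF'.hull_waveCut hsU htU, ?_, ?_⟩
  · intro D hD
    obtain ⟨X, h1, h2, rfl⟩ := (hS D hD).min.side
    exact ⟨X, G.hull t U, h1, h2, rfl, subset_hull t U hsU, not_mem_hull htU, rfl,
      (hsub X (Or.inr ⟨h1, h2, hD⟩)).trans (subset_hull t U)⟩
  · intro C' hC' hub
    obtain ⟨Y, h1, h2, rfl⟩ := hC'.side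
    refine ⟨G.hull t U, Y, subset_hull t U hsU, not_mem_hull htU, rfl, h1, h2, rfl, ?_⟩
    rw [← hull_eq_of_min hconn hC' h1 h2]
    apply hull_mono
    apply Set.iUnion_subset
    rintro ⟨X, rfl | ⟨h3, h4, h5⟩⟩
    · simpa using h1
    · obtain ⟨X', Y', a1, a2, a3, b1, b2, b3, hle⟩ := hub _ h5
      change X ⊆ Y
      rw [side_unique hconn h3 a1 a3, side_unique hconn h1 b1 b3]
      exact hle

/-- Lifting a walk of the contracted graph. -/
theorem contract_lift {X : Set V} {s : V} (hs : s ∈ X) {a b : V}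
    (q : (G.contract X s).Walk a b) (hb : b ∉ X) (Y : Set V) (hq : ∀ w ∈ q.support, w ∈ Y) :
    (a ∉ X ∧ ∃ p : G.Walk a b, (∀ w ∈ p.support, w ∈ X ∪ Y) ∧
      ∀ f ∈ p.edges, f ∈ Set.image Subtype.val {e | e ∈ q.edges}) ∨
    ∃ z ∈ X, ∃ p : G.Walk z b, (∀ w ∈ p.support, w ∈ X ∪ Y) ∧
      ∀ f ∈ p.edges, f ∈ Set.image Subtype.val {e | e ∈ q.edges} := by
  classical
  induction q with
  | nil v =>
    left
    exact ⟨hb, .nil v, fun w hw => Or.inr (hq w hw), by simp [Walk.edges]⟩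
  | @cons a a' b f hf q ih =>
    simp only [Walk.support, List.mem_cons, forall_eq_or_imp] at hq
    have hmono : ∀ g, g ∈ Set.image Subtype.val {e | e ∈ q.edges} →
        g ∈ Set.image Subtype.val {e | e ∈ (Walk.cons f hf q).edges} := by
      rintro _ ⟨g, hg, rfl⟩
      exact ⟨g, List.mem_cons_of_mem _ hg, rfl⟩
    rcases ih hb hq.2 with ⟨ha', p, h1, h2⟩ | ⟨z, hz, p, h1, h2⟩
    · have hu : ∃ u, G.inc f.1 = s(u, a') ∧ (u ∈ X ∨ u = a) := by
        have hf' : Sym2.map (fun v => if v ∈ X then s else v) (G.inc f.1) = s(a, a') := hf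
        induction hfi : G.inc f.1 with
        | _ u w =>
        rw [hfi, Sym2.map_mk, Sym2.eq_iff] at hf'
        have aux : ∀ w, (if w ∈ X then s else w) = a' → w = a' := by
          intro w hw
          split_ifs at hw
          · exact absurd (hw ▸ hs) ha'
          · exact hw
        have aux2 : ∀ w, (if w ∈ X then s else w) = a → w ∈ X ∨ w = a := by
          intro w hw
          split_ifs at hw with h
          · exact Or.inl h
          · exact Or.inr hw
        rcases hf' with ⟨h3, h4⟩ | ⟨h3, h4⟩
        · rw [aux w h4]
          exact ⟨u, rfl, aux2 u h3⟩
        · rw [aux u h3]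
          exact ⟨w, Sym2.eq_swap, aux2 w h4⟩
      obtain ⟨u, hu, hua⟩ := hu
      have hedges : ∀ g ∈ (Walk.cons f.1 hu p).edges,
          g ∈ Set.image Subtype.val {e | e ∈ (Walk.cons f hf q).edges} := by
        intro g hg
        simp only [Walk.edges, List.mem_cons] at hg
        rcases hg with rfl | hg
        · exact ⟨f, by simp [Walk.edges], rfl⟩
        · exact hmono g (h2 g hg)
      have hsup : ∀ w ∈ (Walk.cons f.1 hu p).support, w ∈ X ∪ Y := by
        intro w hw
        simp only [Walk.support, List.mem_cons] at hw
        rcases hw with rfl | hw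
        · rcases hua with h | rfl
          · exact Or.inl h
          · exact Or.inr hq.1
        · exact h1 w hw
      by_cases huX : u ∈ X
      · exact Or.inr ⟨u, huX, _, hsup, hedges⟩
      · obtain rfl := hua.resolve_left huX
        exact Or.inl ⟨huX, _, hsup, hedges⟩
    · exact Or.inr ⟨z, hz, p, h1, fun g hg => hmono g (h2 g hg)⟩

theorem contract_inc_of {X : Set V} {s : V} (hs : s ∈ X) {e : E} {x y : V}
    (hxy : G.inc e = s(x, y)) (hy : y ∉ X) :
    ∃ h : ¬ (Sym2.map (fun v => open Classical in if v ∈ X then s else v) (G.inc e)).IsDiag,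
      (G.contract X s).inc ⟨e, h⟩ = s(open Classical in if x ∈ X then s else x, y) := by
  classical
  have hm : Sym2.map (fun v => if v ∈ X then s else v) (G.inc e)
      = s(if x ∈ X then s else x, y) := by
    rw [hxy, Sym2.map_mk]
    simp [hy]
  have hd : ¬ (Sym2.map (fun v => if v ∈ X then s else v) (G.inc e)).IsDiag := by
    rw [hm, Sym2.mk_isDiag_iff]
    split_ifs with h
    · rintro rfl; exact hy hs
    · rintro rfl
      exact G.not_isDiag e (by simp [hxy])
  exact ⟨hd, hm⟩

theorem contract_mem {X : Set V} {s : V} (e) {v : V} (hv : v ∈ (G.contract X s).inc e) :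
    v = s ∨ v ∉ X := by
  classical
  have hv' : v ∈ Sym2.map (fun v => if v ∈ X then s else v) (G.inc e.1) := hv
  rw [Sym2.mem_map] at hv'
  obtain ⟨w, -, hw⟩ := hv'
  split_ifs at hw with h
  · exact Or.inl hw.symm
  · subst hw; exact Or.inr h

theorem inci_eq_cut (s : V) : G.inci s = G.cut {s} := by
  ext e
  constructor
  · intro h
    obtain ⟨y, hy⟩ := Sym2.mem_iff_exists.1 (show s ∈ G.inc e from h)
    refine ⟨s, y, hy, rfl, ?_⟩
    rintro rfl
    exact G.not_isDiag e (by simp [hy])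
  · rintro ⟨x, y, hxy, rfl, hy⟩
    show x ∈ G.inc e
    simp [hxy]

theorem contract_linking {X Y : Set V} {s : V} (hs : s ∈ X) (hsY : s ∈ Y) {F : E → Set E}
    (hF : G.Linking {s} X F) {F'} (hF' : (G.contract X s).Linking {s} Y F') :
    ∃ F'', G.Linking {s} (X ∪ Y) F'' := by
  classical
  let F₁ : E → Set E := fun e => {f | ∃ h h', (⟨f, h'⟩ : {e : E //
    ¬ (Sym2.map (fun v => if v ∈ X then s else v) (G.inc e)).IsDiag}) ∈ F' ⟨e, h⟩}
  have hcut : ∀ e x y, G.inc e = s(x, y) → x ∈ X ∪ Y → y ∉ X ∪ Y →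
      ∃ h, (G.contract X s).inc ⟨e, h⟩ = s(if x ∈ X then s else x, y) ∧
        (if x ∈ X then s else x) ∈ Y ∧ y ∉ Y := by
    intro e x y hxy hx hy
    have hyX : y ∉ X := fun h => hy (Or.inl h)
    obtain ⟨h, h'⟩ := contract_inc_of hs hxy hyX
    refine ⟨h, h', ?_, fun h => hy (Or.inr h)⟩
    split_ifs with hxX
    · exact hsY
    · exact hx.resolve_left hxX
  have hcut' : ∀ e ∈ G.cut (X ∪ Y), ∃ h, (⟨e, h⟩ : {e : E //
      ¬ (Sym2.map (fun v => if v ∈ X then s else v) (G.inc e)).IsDiag}) ∈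
        (G.contract X s).cut Y := by
    rintro e ⟨x, y, hxy, hx, hy⟩
    obtain ⟨h, h1, h2, h3⟩ := hcut e x y hxy hx hy
    exact ⟨h, _, _, h1, h2, h3⟩
  have h1 : G.Linking ({s} ∪ X) (X ∪ Y) F₁ := by
    refine ⟨?_, ?_, ?_⟩
    · intro e he
      obtain ⟨h, h'⟩ := hcut' e he
      exact ⟨h, h, hF'.1 _ h'⟩
    · intro e x y hxy hx hy
      by_cases hxX : x ∈ X
      · exact ⟨x, Or.inr hxX, .nil x, by simpa [Walk.support] using Or.inl hxX,
          by simp [Walk.edges]⟩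
      obtain ⟨h, h1, h2, h3⟩ := hcut e x y hxy hx hy
      rw [if_neg hxX] at h1 h2
      obtain ⟨z, hz, q, hq1, hq2⟩ := hF'.2.1 _ x y h1 h2 h3
      rw [Set.mem_singleton_iff] at hz
      subst hz
      rcases contract_lift hs q hxX Y hq1 with ⟨hc, -⟩ | ⟨z', hz', p, hp1, hp2⟩
      · exact absurd hs hc
      · refine ⟨z', Or.inr hz', p, hp1, ?_⟩
        intro f hf
        obtain ⟨g, hg, rfl⟩ := hp2 f hf
        exact ⟨h, g.2, hq2 g hg⟩
    · rintro e he e' he' f ⟨h1, h2, h3⟩ ⟨h1', h2', h3'⟩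
      obtain ⟨h, hc⟩ := hcut' e he
      obtain ⟨h', hc'⟩ := hcut' e' he'
      exact congrArg Subtype.val (hF'.2.2 _ hc _ hc' _ h3 h3')
  obtain ⟨F'', hF''⟩ := Linking.iUnion (s := s) (fun b : Bool => if b then X ∪ Y else X)
    (fun b => if b then F₁ else F) (by
      intro b
      cases b
      · exact hF.mono Set.subset_union_left
      · simp only [if_true]
        refine h1.mono (Set.union_subset_union_right _ ?_)
        intro x hx
        simp only [Set.mem_iUnion]
        exact ⟨false, by decide, by simpa using hx⟩)
  refine ⟨F'', ?_⟩
  convert hF'' using 1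
  ext v
  simp only [Set.mem_iUnion, Bool.exists_bool]
  simp

end Helpers

end Multigraph

/-- The cuts of `st`-waves ordered by `≼` form a complete lattice which is a
sup-sublattice of the `⊆`-minimal `st`-cuts: every family of wave cuts has a
least upper bound among all minimal `st`-cuts which is itself a wave cut, and a
greatest lower bound among the wave cuts. Moreover, contracting the `s`-side of
the largest wave cut to `s` yields a graph in which every `st`-wave is trivial
(its set of last edges is `δ(s)`) and the trivial `st`-wave exists. -/
theorem waveCuts_completeLattice {V : Type u} {E : Type v} (G : Multigraph V E)
    (s t : V) (hconn : G.Connected) (hst : s ≠ t) :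
    (∀ S : Set (Set E), (∀ C ∈ S, G.IsWaveCut s t C) →
      (∃ C, G.IsWaveCut s t C ∧ (∀ D ∈ S, G.CutLE s t D C) ∧
        ∀ C', G.IsMinSepCut {s} {t} C' → (∀ D ∈ S, G.CutLE s t D C') →
          G.CutLE s t C C') ∧
      (∃ C, G.IsWaveCut s t C ∧ (∀ D ∈ S, G.CutLE s t C D) ∧
        ∀ C', G.IsWaveCut s t C' → (∀ D ∈ S, G.CutLE s t C' D) →
          G.CutLE s t C' C)) ∧
    (∀ (C : Set E) (X : Set V), G.IsWaveCut s t C →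
      (∀ D, G.IsWaveCut s t D → G.CutLE s t D C) →
      s ∈ X → t ∉ X → C = G.cut X →
      (∀ W : Set ((G.contract X s).SPath s), (G.contract X s).IsWave s {t} W →
        (G.contract X s).lastEdges W = (G.contract X s).inci s) ∧
      (G.contract X s).IsWave s {t}
        {p : (G.contract X s).SPath s | p.walk.edges.length = 1}) := by
  classical
  have hsup := fun S hS => Multigraph.waveCuts_sup hconn hst (G := G) S hS
  refine ⟨fun S hS => ⟨hsup S hS, ?_⟩, ?_⟩
  · obtain ⟨C, h1, h2, h3⟩ := hsup {C' | G.IsWaveCut s t C' ∧ ∀ D ∈ S, G.CutLE s t C' D}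
      (fun C h => h.1)
    exact ⟨C, h1, fun D hD => h3 D (hS D hD).min fun D' hD' => hD'.2 D hD,
      fun C' hC' hle => h2 C' ⟨hC', hle⟩⟩
  · rintro C X hC hmax hs ht rfl
    obtain ⟨F, hF⟩ := hC.linking hs rfl
    constructor
    · intro W hW
      obtain ⟨Y, hsY, htY, hY⟩ := hW.2.side
      obtain ⟨F', hF'⟩ := hW.linking hsY hY
      obtain ⟨F'', hF''⟩ := Multigraph.contract_linking hs hsY hF hF'
      have hsU : s ∈ X ∪ Y := Or.inl hs
      have htU : t ∉ X ∪ Y := fun h => h.elim ht htY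
      obtain ⟨X', Y', a1, a2, a3, b1, b2, b3, hle⟩ := hmax _ (hF''.hull_waveCut hsU htU)
      rw [← Multigraph.side_unique hconn hs b1 b3,
        ← Multigraph.side_unique hconn (Multigraph.subset_hull t _ hsU) a1 a3] at hle
      have hYX : Y ⊆ X := fun v hv => hle (Multigraph.subset_hull t _ (Or.inr hv))
      rw [hY, Multigraph.inci_eq_cut]
      ext e
      constructor
      · rintro ⟨x, y, hxy, hx, hy⟩
        have hxs : x = s := (Multigraph.contract_mem e (v := x) (by simp [hxy])).resolve_right
          (fun h => h (hYX hx))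
        subst hxs
        exact ⟨x, y, hxy, rfl, fun h => hy (by rw [Set.mem_singleton_iff.1 h]; exact hsY)⟩
      · rintro ⟨x, y, hxy, rfl, hy⟩
        exact ⟨x, y, hxy, hsY, fun h =>
          (Multigraph.contract_mem e (v := y) (by simp [hxy])).elim hy (fun h' => h' (hYX h))⟩
    · have hL : (G.contract X s).lastEdges
          {p : (G.contract X s).SPath s | p.walk.edges.length = 1}
            = (G.contract X s).cut {s} := by
        ext e
        constructor
        · rintro ⟨⟨l, w, hw, hne⟩, hp, hpe⟩
          cases w with
          | nil => simp [Multigraph.Walk.edges] at hp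
          | cons f hf q =>
            cases q with
            | cons g hg r => simp [Multigraph.Walk.edges] at hp
            | nil =>
              simp only [Multigraph.Walk.edges, List.getLast?_singleton,
                Option.some.injEq] at hpe
              subst hpe
              refine ⟨s, l, hf, rfl, ?_⟩
              rintro rfl
              simp [Multigraph.Walk.support] at hw
        · rintro ⟨x, y, hxy, rfl, hy⟩
          refine ⟨⟨y, .cons e hxy (.nil y), ?_, by simp [Multigraph.Walk.edges]⟩,
            by simp [Multigraph.Walk.edges], by simp [Multigraph.Walk.edges]⟩
          simp only [Multigraph.Walk.support, List.nodup_cons, List.mem_singleton]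
          exact ⟨fun h => hy h.symm, by simp⟩
      refine ⟨?_, hL ▸ ⟨⟨{s}, subset_rfl, by simpa using hst.symm, rfl⟩, ?_⟩⟩
      · rintro ⟨l, w, hw, hne⟩ hp ⟨l', w', hw', hne'⟩ hp' hdiff e he he'
        apply hdiff
        cases w with
        | nil => simp [Multigraph.Walk.edges] at hp
        | cons f hf q =>
          cases q with
          | cons g hg r => simp [Multigraph.Walk.edges] at hp
          | nil =>
            cases w' with
            | nil => simp [Multigraph.Walk.edges] at hp'
            | cons f' hf' q' =>
              cases q' with
              | cons g hg r => simp [Multigraph.Walk.edges] at hp'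
              | nil =>
                simp only [Multigraph.Walk.edges, List.mem_singleton] at he he'
                subst he
                subst he'
                have hll : l = l' := by
                  have := hf.symm.trans hf'
                  rw [Sym2.eq_iff] at this
                  rcases this with ⟨-, h⟩ | ⟨h, h'⟩
                  · exact h
                  · exact h'.trans h
                subst hll
                rfl
      · rintro _ ⟨Y, hsY, htY, rfl⟩ hsub
        have hsY : s ∈ Y := by simpa using hsY
        have htY : t ∉ Y := by simpa using htY
        have hout : ∀ v, v ∉ X → v ∉ Y := by
          intro v hv
          have hh := Multigraph.hull_eq_of_min hconn hC.min hs ht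
          rw [← hh] at hv
          simp only [Multigraph.hull, Set.mem_ofPred_eq, not_not] at hv
          obtain ⟨p, hp⟩ := hv
          have : ∀ {a b : V} (p : G.Walk a b), (∀ z ∈ p.support, z ∈ Xᶜ) → a ∉ Y → b ∉ Y := by
            intro a b p hp ha
            induction p with
            | nil => exact ha
            | @cons a a' b f hf q ih =>
              simp only [Multigraph.Walk.support, List.mem_cons, forall_eq_or_imp] at hp
              apply ih hp.2
              intro ha'
              have haX : a ∉ X := hp.1
              have ha'X : a' ∉ X := hp.2 a' q.start_mem
              obtain ⟨h, hi⟩ := Multigraph.contract_inc_of hs hf ha'X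
              rw [if_neg haX] at hi
              obtain ⟨x, y, hxy, hx, -⟩ := hsub
                (Multigraph.mem_cut_of (hi.trans Sym2.eq_swap) ha' ha)
              rw [Set.mem_singleton_iff] at hx
              subst hx
              have : x ∈ s(a, a') := by rw [← hi, hxy]; simp
              rcases Sym2.mem_iff.1 this with rfl | rfl
              · exact haX hs
              · exact ha'X hs
          exact this p hp htY
        refine Set.Subset.antisymm hsub ?_
        rintro e ⟨x, y, hxy, rfl, hy⟩
        exact ⟨x, y, hxy, hsY, hout y
          ((Multigraph.contract_mem e (v := y) (by simp [hxy])).resolve_left hy)⟩
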